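/- Let X be a paracompact connected space, Z = □_{s∈S} Z_s a box product of equiconnected metrizable spaces, and g : X → Z a Baire-one map. Then there exists a separately continuous map f : X² → Z with f(x,x) = g(x) for all x ∈ X. -/

import Mathlib

open Filter Topology Set

/-- The box topology on a product of topological spaces: generated by all boxes
`∏ s, G s` with each `G s` open. -/
def boxTopology {S : Type*} {X : S → Type*} [∀ s, TopologicalSpace (X s)] :
    TopologicalSpace (∀ s, X s) :=
  TopologicalSpace.generateFrom
    {U | ∃ G : ∀ s, Set (X s), (∀ s, IsOpen (G s)) ∧ U = Set.univ.pi G}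

/-- `σ(a)`: the set of points differing from `a` in only finitely many coordinates. -/
def smallBox {S : Type*} {X : S → Type*} (a : ∀ s, X s) : Set (∀ s, X s) :=
  {x | {s | x s ≠ a s}.Finite}

/-! A box-convergent sequence eventually agrees with its limit off finitely many coordinates, and a
connected subset of a box product of completely regular spaces lies in a single `σ(a)`. So after
dropping finitely many approximants and prepending the constant `a`, each `x` moves only finitely
many coordinates of the approximating sequence, and it suffices to extend each coordinate of `g`
from the diagonal so that the coordinates which stay at `a` along `x` give the constant `a` on
`{x} × X` and `X × {x}`.

For one metrizable factor, replace `x` by its sequence of approximants `u`, a point of the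
metrizable space `ℕ → Z`. Send `(u, v)` with `u ≠ v` to the point at time
`log⁺ (dist u a / dist u v)` on the path through `u 0, u 1, u 2, …`. When `(u, v)` approaches
`(w, w)` along `u = w` or `v = w`, the time grows without bound but slowly enough for the visited
terms of `u` to be close to those of `w`, which converge. The case `w = a` is exceptional: there the
numerator makes the time zero along `v = a`, while along `u = a` the path is constant. -/

section BoxProduct

variable {S : Type*} {Z : S → Type*}

lemma smallBox_trans {x y a : ∀ s, Z s} (hxy : x ∈ smallBox y) (hya : y ∈ smallBox a) :
    x ∈ smallBox a := by
  refine (hxy.union hya).subset fun s hs => ?_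
  by_cases h : x s = y s
  · exact Or.inr fun hy => hs (h.trans hy)
  · exact Or.inl h

variable [∀ s, TopologicalSpace (Z s)]

attribute [local instance] boxTopology

lemma isOpen_box {G : ∀ s, Set (Z s)} (hG : ∀ s, IsOpen (G s)) : IsOpen (univ.pi G) :=
  TopologicalSpace.isOpen_generateFrom_of_mem ⟨G, hG, rfl⟩

lemma continuous_apply_box (s : S) : Continuous fun z : ∀ s, Z s => z s := by
  classical
  refine continuous_def.2 fun U hU => ?_
  change IsOpen (Function.eval s ⁻¹' U)
  rw [← univ_pi_update_univ]
  refine isOpen_box fun r => ?_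
  obtain rfl | hr := eq_or_ne r s
  · simpa only [Function.update_self] using hU
  · simp only [Function.update_of_ne hr, isOpen_univ]

lemma continuous_box_of_finite {X : Type*} [TopologicalSpace X] {f : X → ∀ s, Z s} {a : ∀ s, Z s}
    {F : Set S} (hF : F.Finite) (hf : ∀ s, Continuous fun x => f x s)
    (hfa : ∀ s ∉ F, ∀ x, f x s = a s) : Continuous f := by
  refine continuous_generateFrom_iff.2 ?_
  rintro _ ⟨G, hG, rfl⟩
  have hpre : f ⁻¹' univ.pi G =
      (⋂ s ∈ F, (fun x => f x s) ⁻¹' G s) ∩ {_x | ∀ s ∉ F, a s ∈ G s} := by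
    ext x
    simp only [mem_preimage, mem_univ_pi, mem_inter_iff, mem_iInter, mem_ofPred_eq]
    constructor
    · exact fun hx => ⟨fun s _ => hx s, fun s hs => hfa s hs x ▸ hx s⟩
    · rintro ⟨hxF, ha⟩ s
      by_cases hs : s ∈ F
      · exact hxF s hs
      · exact (hfa s hs x).symm ▸ ha s hs
  rw [hpre]
  exact (hF.isOpen_biInter fun s _ => (hG s).preimage (hf s)).inter isOpen_const

section Convergence

variable [∀ s, T1Space (Z s)] {u : ℕ → ∀ s, Z s} {z : ∀ s, Z s}

lemma eventually_eq_of_tendsto_box (hu : Tendsto u atTop (𝓝 z)) (M : S → ℕ) :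
    ∀ᶠ n in atTop, ∀ s, n ≤ M s → u n s = z s := by
  let B (s : S) : Set (Z s) := (fun n => u n s) '' Iic (M s) \ {z s}
  have hopen : IsOpen (univ.pi fun s => (B s)ᶜ) :=
    isOpen_box fun s => ((finite_Iic (M s)).image _).sdiff.isClosed.isOpen_compl
  have hz : z ∈ univ.pi fun s => (B s)ᶜ := fun s _ hs => hs.2 rfl
  filter_upwards [hu (hopen.mem_nhds hz)] with n hn s hns
  by_contra hne
  exact hn s (mem_univ s) ⟨⟨n, hns, rfl⟩, hne⟩

lemma exists_injective_mem_of_antitone {A : ℕ → Set S} (hA : Antitone A)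
    (hinf : ∀ n, (A n).Infinite) : ∃ σ : ℕ → S, Function.Injective σ ∧ ∀ n, σ n ∈ A n := by
  classical
  obtain ⟨p, hp, hlt⟩ := exists_seq_of_forall_finset_exists (fun p : ℕ × S => p.2 ∈ A p.1)
    (fun p q => p.1 < q.1 ∧ p.2 ≠ q.2) fun T _ => by
      obtain ⟨s, hs, hsT⟩ := (hinf (T.sup Prod.fst + 1)).exists_notMem_finset (T.image Prod.snd)
      exact ⟨(_, s), hs, fun q hq => ⟨Nat.lt_succ_of_le (Finset.le_sup (f := Prod.fst) hq),
        fun h => hsT (Finset.mem_image.2 ⟨q, hq, h⟩)⟩⟩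
  have hmono : StrictMono fun n => (p n).1 := fun m n hmn => (hlt m n hmn).1
  exact ⟨fun n => (p n).2, Function.Injective.of_lt_imp_ne fun m n hmn => (hlt m n hmn).2,
    fun n => hA (hmono.id_le n) (hp n)⟩

lemma exists_finite_tail_ne_of_tendsto_box (hu : Tendsto u atTop (𝓝 z)) :
    ∃ N, {s | ∃ n ≥ N, u n s ≠ z s}.Finite := by
  by_contra! hinf
  have hanti : Antitone fun N => {s | ∃ n ≥ N, u n s ≠ z s} :=
    fun _ _ hMN _ ⟨n, hn, hne⟩ => ⟨n, hMN.trans hn, hne⟩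
  obtain ⟨σ, hσ, hmem⟩ := exists_injective_mem_of_antitone hanti hinf
  choose k hk hne using hmem
  obtain ⟨N, hN⟩ := eventually_atTop.1 (eventually_eq_of_tendsto_box hu (Function.extend σ k 0))
  exact hne N (hN (k N) (hk N) (σ N) (hσ.extend_apply k 0 N).ge)

lemma finite_setOf_exists_ne_of_tendsto_box {a : ∀ s, Z s} (hua : ∀ n, u n ∈ smallBox a)
    (hu : Tendsto u atTop (𝓝 z)) : {s | ∃ n, u n s ≠ a s}.Finite := by
  obtain ⟨N, hN⟩ := exists_finite_tail_ne_of_tendsto_box hu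
  refine (((finite_Iic N).biUnion fun n _ => hua n).union hN).subset ?_
  rintro s ⟨n, hn⟩
  by_contra! hs
  simp only [mem_union, mem_iUnion, mem_Iic, mem_ofPred_eq, not_or, not_exists, not_and,
    not_not] at hs
  obtain ⟨hhead, htail⟩ := hs
  have heq : ∀ m ≤ N, u m s = a s := hhead
  rcases le_total n N with hnN | hNn
  · exact hn (heq n hnN)
  · exact hn ((htail n hNn).trans ((htail N le_rfl).symm.trans (heq N le_rfl)))

end Convergence

lemma isLocallyConstant_bddAbove_box {φ : ∀ s, Z s → ℝ} (hφ : ∀ s, Continuous (φ s)) :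
    IsLocallyConstant fun z : ∀ s, Z s => BddAbove (range fun s => φ s (z s)) := by
  refine (IsLocallyConstant.iff_eventually_eq _).2 fun z => ?_
  have hopen : IsOpen (univ.pi fun s => {p | dist (φ s p) (φ s (z s)) < 1}) :=
    isOpen_box fun s => isOpen_lt ((hφ s).dist continuous_const) continuous_const
  have hz : z ∈ univ.pi fun s => {p | dist (φ s p) (φ s (z s)) < 1} := fun s _ => by simp
  filter_upwards [hopen.mem_nhds hz] with y hy
  have hclose : ∀ s, |φ s (y s) - φ s (z s)| < 1 := fun s => hy s (mem_univ s)
  simp only [bddAbove_def, forall_mem_range, eq_iff_iff]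
  constructor <;> rintro ⟨C, hC⟩ <;> refine ⟨C + 1, fun s => ?_⟩ <;>
    linarith [hC s, (abs_lt.1 (hclose s)).1, (abs_lt.1 (hclose s)).2]

lemma subset_smallBox_of_isPreconnected [∀ s, T35Space (Z s)] {C : Set (∀ s, Z s)}
    (hC : IsPreconnected C) {a : ∀ s, Z s} (ha : a ∈ C) : C ⊆ smallBox a := by
  intro z hz
  by_contra hinf
  let k : ℕ ↪ {s | z s ≠ a s} := Set.Infinite.natEmbedding _ hinf
  let weight : S → ℕ := Function.extend (fun n => (k n : S)) id 0
  have hweight (n : ℕ) : weight (k n) = n :=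
    (Subtype.val_injective.comp k.injective).extend_apply id 0 n
  have hsep (s : S) : ∃ φ : Z s → ℝ, Continuous φ ∧ φ (a s) = 0 ∧
      (z s ≠ a s → φ (z s) = weight s) := by
    by_cases hs : z s = a s
    · exact ⟨0, continuous_zero, rfl, fun hne => absurd hs hne⟩
    · obtain ⟨ψ, hψ, hψa, hψz⟩ := CompletelyRegularSpace.completely_regular (a s) {z s}
        isClosed_singleton (Ne.symm hs)
      refine ⟨fun p => weight s * ψ p, by fun_prop, by simp [hψa], fun _ => ?_⟩
      simp [hψz (mem_singleton _)]
  choose φ hφ hφa hφz using hsep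
  have hbdd : BddAbove (range fun s => φ s (z s)) :=
    ((isLocallyConstant_bddAbove_box hφ).apply_eq_of_isPreconnected hC ha hz).mp
      ⟨0, by rintro _ ⟨s, rfl⟩; exact (hφa s).le⟩
  obtain ⟨b, hb⟩ := hbdd
  obtain ⟨n, hn⟩ := exists_nat_gt b
  have hle : (n : ℝ) ≤ b := by
    simpa only [hφz _ (k n).2, hweight] using hb (mem_range_self (k n : S))
  exact hn.not_ge hle

lemma exists_approx_finite_support {X : Type*} [TopologicalSpace X] [ConnectedSpace X]
    [∀ s, T35Space (Z s)] {h : ℕ → X → ∀ s, Z s} {g : X → ∀ s, Z s} (hc : ∀ n, Continuous (h n))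
    (hg : ∀ x, Tendsto (fun n => h n x) atTop (𝓝 (g x))) :
    ∃ (a : ∀ s, Z s) (u : ℕ → X → ∀ s, Z s), (∀ n, Continuous (u n)) ∧
      (∀ x, Tendsto (fun n => u n x) atTop (𝓝 (g x))) ∧ (∀ x, u 0 x = a) ∧
      ∀ x, {s | ∃ n, u n x s ≠ a s}.Finite := by
  obtain ⟨x₀⟩ : Nonempty X := inferInstance
  obtain ⟨N, hN⟩ := exists_finite_tail_ne_of_tendsto_box (hg x₀)
  let u : ℕ → X → ∀ s, Z s
    | 0 => fun _ => g x₀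
    | n + 1 => h (n + N)
  have hu (n : ℕ) : Continuous (u n) := by
    cases n
    · exact continuous_const
    · exact hc _
  have hug (x : X) : Tendsto (fun n => u n x) atTop (𝓝 (g x)) :=
    (tendsto_add_atTop_iff_nat 1).1 ((tendsto_add_atTop_iff_nat N).2 (hg x))
  have hbase (n : ℕ) : u n x₀ ∈ smallBox (g x₀) := by
    cases n with
    | zero => exact finite_empty.subset fun s hs => hs rfl
    | succ n => exact hN.subset fun s hs => ⟨n + N, Nat.le_add_left N n, hs⟩
  have hmem (x : X) (n : ℕ) : u n x ∈ smallBox (g x₀) :=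
    smallBox_trans (subset_smallBox_of_isPreconnected (isPreconnected_range (hu n))
      (mem_range_self x₀) (mem_range_self x)) (hbase n)
  exact ⟨g x₀, u, hu, hug, fun _ => rfl,
    fun x => finite_setOf_exists_ne_of_tendsto_box (hmem x) (hug x)⟩

end BoxProduct

/-- A map `lam` making `Z` equiconnected: it joins any two points of `Z` by a path that depends
continuously on its endpoints and is constant when they coincide. -/
structure IsEquiconnecting {Z : Type*} [TopologicalSpace Z] (lam : Z → Z → unitInterval → Z) :
    Prop where
  continuous : Continuous fun p : Z × Z × unitInterval => lam p.1 p.2.1 p.2.2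
  apply_zero (x y : Z) : lam x y 0 = x
  apply_one (x y : Z) : lam x y 1 = y
  apply_self (x : Z) (t : unitInterval) : lam x x t = x

section Polyline

variable {Z : Type*} {lam : Z → Z → unitInterval → Z}

/-- The path `ℝ → Z` through the points `u 0, u 1, u 2, …` at times `0, 1, 2, …`, following `lam`
in between; it rests at `u 0` at negative times. -/
noncomputable def polyline (lam : Z → Z → unitInterval → Z) (u : ℕ → Z) (t : ℝ) : Z :=
  lam (u ⌊t⌋₊) (u (⌊t⌋₊ + 1)) (projIcc 0 1 zero_le_one (t - ⌊t⌋₊))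

variable [TopologicalSpace Z]

lemma IsEquiconnecting.tendsto (hlam : IsEquiconnecting lam) {ι : Type*} {l : Filter ι}
    {p q : ι → Z} {z : Z} (hp : Tendsto p l (𝓝 z)) (hq : Tendsto q l (𝓝 z))
    (τ : ι → unitInterval) : Tendsto (fun i => lam (p i) (q i) (τ i)) l (𝓝 z) := by
  intro U hU
  have htube : ∀ᶠ w : Z × Z in 𝓝 (z, z), ∀ t ∈ univ, lam w.1 w.2 t ∈ U := by
    refine isCompact_univ.eventually_forall_of_forall_eventually fun t _ => ?_
    have hcont : Continuous fun w : (Z × Z) × unitInterval => lam w.1.1 w.1.2 w.2 :=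
      hlam.continuous.comp (by fun_prop :
        Continuous fun w : (Z × Z) × unitInterval => (w.1.1, w.1.2, w.2))
    refine hcont.continuousAt.eventually_mem ?_
    rwa [hlam.apply_self]
  rw [mem_map]
  filter_upwards [(hp.prodMk_nhds hq).eventually htube] with i hi using hi (τ i) (mem_univ _)

lemma polyline_const (hlam : IsEquiconnecting lam) (a : Z) (t : ℝ) :
    polyline lam (fun _ => a) t = a :=
  hlam.apply_self a _

lemma polyline_of_nonpos (hlam : IsEquiconnecting lam) (u : ℕ → Z) {t : ℝ} (ht : t ≤ 0) :
    polyline lam u t = u 0 := by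
  rw [polyline, Nat.floor_of_nonpos ht, Nat.cast_zero, sub_zero, projIcc_of_le_left _ ht]
  exact hlam.apply_zero _ _

lemma polyline_of_mem_Icc (hlam : IsEquiconnecting lam) (u : ℕ → Z) {n : ℕ} {t : ℝ}
    (ht : t ∈ Icc (n : ℝ) (n + 1)) :
    polyline lam u t = lam (u n) (u (n + 1)) (projIcc 0 1 zero_le_one (t - n)) := by
  obtain hlt | rfl := ht.2.lt_or_eq
  · rw [polyline, (Nat.floor_eq_iff (n.cast_nonneg.trans ht.1)).2 ⟨ht.1, hlt⟩]
  · have hfloor : ⌊(n : ℝ) + 1⌋₊ = n + 1 := by exact_mod_cast Nat.floor_natCast (n + 1)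
    rw [polyline, hfloor, Nat.cast_add_one, sub_self, add_sub_cancel_left,
      projIcc_left, projIcc_right]
    exact (hlam.apply_zero _ _).trans (hlam.apply_one _ _).symm

lemma continuous_polyline (hlam : IsEquiconnecting lam) :
    Continuous fun p : (ℕ → Z) × ℝ => polyline lam p.1 p.2 := by
  have hfin : LocallyFinite fun m : ℤ => {p : (ℕ → Z) × ℝ | p.2 ∈ Icc (m : ℝ) (m + 1)} :=
    (locallyFinite_Icc_of_tendsto tendsto_intCast_atTop_atTop
      (tendsto_atBot_add_const_right _ 1 (tendsto_intCast_atBot_iff.2 tendsto_id))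
      ).preimage_continuous continuous_snd
  have hcover (p : (ℕ → Z) × ℝ) : ∃ m : ℤ, p.2 ∈ Icc (m : ℝ) (m + 1) :=
    ⟨⌊p.2⌋, Int.floor_le _, (Int.lt_floor_add_one _).le⟩
  refine hfin.continuous (iUnion_eq_univ_iff.2 hcover)
    (fun m => isClosed_Icc.preimage continuous_snd) fun m => ?_
  rcases le_or_gt 0 m with hm | hm
  · lift m to ℕ using hm with n
    have harg : Continuous fun p : (ℕ → Z) × ℝ =>
        (p.1 n, p.1 (n + 1), projIcc (0 : ℝ) 1 zero_le_one (p.2 - n)) := by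
      have := continuous_projIcc (h := zero_le_one (α := ℝ))
      fun_prop
    exact (hlam.continuous.comp harg).continuousOn.congr fun p hp =>
      polyline_of_mem_Icc hlam p.1 (by simpa only [Int.cast_natCast, mem_ofPred_eq] using hp)
  · have hzero : Continuous fun p : (ℕ → Z) × ℝ => p.1 0 := by fun_prop
    have hm' : (m : ℝ) + 1 ≤ 0 := by exact_mod_cast hm
    exact hzero.continuousOn.congr fun p hp => polyline_of_nonpos hlam p.1 (hp.2.trans hm')

end Polyline

section DiagonalExtension

open Real
open scoped PiCountable

attribute [local instance] PiCountable.metricSpace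

lemma tendsto_posLog_div_atTop {ι : Type*} {l : Filter ι} {e d : ι → ℝ} {c : ℝ} (hc : 0 < c)
    (he : Tendsto e l (𝓝 c)) (hd : Tendsto d l (𝓝[>] 0)) :
    Tendsto (fun i => log⁺ (e i / d i)) l atTop :=
  tendsto_atTop_mono (fun _ => le_max_right _ _) (tendsto_log_atTop.comp
    (he.pos_mul_atTop hc (tendsto_inv_nhdsGT_zero.comp hd)))

lemma eventually_lt_inv_two_pow_floor_posLog {ι : Type*} {l : Filter ι} {e d : ι → ℝ} {c : ℝ}
    (hc : 0 < c) (he : Tendsto e l (𝓝 c)) (hd : Tendsto d l (𝓝[>] 0)) :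
    ∀ᶠ i in l, d i < 2⁻¹ ^ (⌊log⁺ (e i / d i)⌋₊ + 1) := by
  have ht := tendsto_posLog_div_atTop hc he hd
  have hgeom : Tendsto (fun n : ℕ => (2 / exp 1) ^ n) atTop (𝓝 0) :=
    tendsto_pow_atTop_nhds_zero_of_lt_one (by positivity)
      ((div_lt_one (exp_pos 1)).2 exp_one_gt_two)
  have hlim : Tendsto (fun i => 2 * e i * (2 / exp 1) ^ ⌊log⁺ (e i / d i)⌋₊) l (𝓝 0) := by
    simpa only [mul_zero, Function.comp_def] using
      (he.const_mul 2).mul (hgeom.comp (tendsto_nat_floor_atTop.comp ht))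
  filter_upwards [(tendsto_nhdsWithin_iff.1 hd).2, he.eventually_const_lt hc,
    ht.eventually_gt_atTop 0, hlim.eventually_lt_const one_pos] with i (hdi : 0 < d i) hei hti hi
  set n := ⌊log⁺ (e i / d i)⌋₊
  have hlog : (n : ℝ) ≤ log (e i / d i) := by
    have hle : (n : ℝ) ≤ log⁺ (e i / d i) := Nat.floor_le posLog_nonneg
    rwa [posLog_apply, max_eq_right ((lt_max_iff.1 hti).resolve_left (lt_irrefl 0)).le] at hle
  have hexp : exp 1 ^ n * d i ≤ e i := by
    rwa [← le_div_iff₀ hdi, exp_one_pow, ← le_log_iff_exp_le (div_pos hei hdi)]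
  have hpow : (2 : ℝ) ^ (n + 1) * d i < 1 :=
    calc (2 : ℝ) ^ (n + 1) * d i = 2 * (exp 1 ^ n * d i) * (2 / exp 1) ^ n := by
          rw [div_pow]; field_simp; ring
      _ ≤ 2 * e i * (2 / exp 1) ^ n := by gcongr
      _ < 1 := hi
  rwa [inv_pow, ← one_div, lt_div_iff₀ (by positivity), mul_comm]

variable {Z : Type*} [MetricSpace Z] {lam : Z → Z → unitInterval → Z} {a : Z}

lemma tendsto_apply_of_dist_lt_inv_two_pow {ι : Type*} {l : Filter ι} {u : ι → ℕ → Z} {n : ι → ℕ}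
    {w : ℕ → Z} {z : Z} (hn : Tendsto n l atTop) (hu : Tendsto u l (𝓝 w))
    (hun : ∀ᶠ i in l, dist (u i) w < 2⁻¹ ^ n i) (hw : Tendsto w atTop (𝓝 z)) :
    Tendsto (fun i => u i (n i)) l (𝓝 z) := by
  refine (tendsto_iff_of_dist ?_).2 (hw.comp hn)
  refine squeeze_zero' (.of_forall fun i => dist_nonneg) ?_ (tendsto_iff_dist_tendsto_zero.1 hu)
  filter_upwards [hun] with i hi
  exact PiCountable.dist_le_dist_pi_of_dist_lt (by rwa [Encodable.encode_nat])

lemma tendsto_polyline (hlam : IsEquiconnecting lam) {ι : Type*} {l : Filter ι} {u : ι → ℕ → Z}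
    {t : ι → ℝ} {w : ℕ → Z} {z : Z} (ht : Tendsto t l atTop) (hu : Tendsto u l (𝓝 w))
    (hut : ∀ᶠ i in l, dist (u i) w < 2⁻¹ ^ (⌊t i⌋₊ + 1)) (hw : Tendsto w atTop (𝓝 z)) :
    Tendsto (fun i => polyline lam (u i) (t i)) l (𝓝 z) := by
  have hfloor : Tendsto (fun i => ⌊t i⌋₊) l atTop := tendsto_nat_floor_atTop.comp ht
  have hut' : ∀ᶠ i in l, dist (u i) w < 2⁻¹ ^ ⌊t i⌋₊ := hut.mono fun i hi =>
    hi.trans_le (pow_le_pow_of_le_one (by norm_num) (by norm_num) (Nat.le_succ _))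
  exact hlam.tendsto (tendsto_apply_of_dist_lt_inv_two_pow hfloor hu hut' hw)
    (tendsto_apply_of_dist_lt_inv_two_pow ((tendsto_add_atTop_nat 1).comp hfloor) hu hut hw) _

open Classical in
/-- The value at `(u, v)` of the extension to pairs of sequences of the limit map `u ↦ lim u` on the
diagonal, normalized at the constant sequence `a`. It is meaningful when the sequences converge. -/
noncomputable def diagonalExtension (lam : Z → Z → unitInterval → Z) (a : Z) (u v : ℕ → Z) : Z :=
  haveI : Nonempty Z := ⟨a⟩
  if u = v then limUnder atTop u else polyline lam u (log⁺ (dist u (fun _ => a) / dist u v))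

lemma diagonalExtension_self (lam : Z → Z → unitInterval → Z) (a : Z) {u : ℕ → Z} {z : Z}
    (hu : Tendsto u atTop (𝓝 z)) : diagonalExtension lam a u u = z :=
  (if_pos rfl).trans hu.limUnder_eq

lemma diagonalExtension_of_ne (lam : Z → Z → unitInterval → Z) (a : Z) {u v : ℕ → Z}
    (h : u ≠ v) : diagonalExtension lam a u v =
      polyline lam u (log⁺ (dist u (fun _ => a) / dist u v)) :=
  if_neg h

lemma diagonalExtension_const_left (hlam : IsEquiconnecting lam) (v : ℕ → Z) :
    diagonalExtension lam a (fun _ => a) v = a := by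
  obtain rfl | h := eq_or_ne (fun _ => a) v
  · exact diagonalExtension_self lam a tendsto_const_nhds
  · rw [diagonalExtension_of_ne lam a h, polyline_const hlam]

lemma diagonalExtension_of_dist_le (hlam : IsEquiconnecting lam) {u v : ℕ → Z}
    (h : dist u (fun _ => a) ≤ dist u v) : diagonalExtension lam a u v = u 0 := by
  obtain rfl | hne := eq_or_ne u v
  · obtain rfl : u = fun _ => a := dist_le_zero.1 (h.trans_eq (dist_self u))
    exact diagonalExtension_const_left hlam _
  · rw [diagonalExtension_of_ne lam a hne, polyline_of_nonpos hlam]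
    refine ((posLog_eq_zero_iff _).2 ?_).le
    rw [abs_of_nonneg (by positivity)]
    exact div_le_one_of_le₀ h dist_nonneg

lemma continuousAt_diagonalExtension_of_ne (hlam : IsEquiconnecting lam) {u v : ℕ → Z}
    (h : u ≠ v) :
    ContinuousAt (fun p : (ℕ → Z) × (ℕ → Z) => diagonalExtension lam a p.1 p.2) (u, v) := by
  have hratio : ContinuousAt
      (fun p : (ℕ → Z) × (ℕ → Z) => dist p.1 (fun _ => a) / dist p.1 p.2) (u, v) :=
    (by fun_prop : Continuous fun p : (ℕ → Z) × (ℕ → Z) => dist p.1 fun _ => a).continuousAt.div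
      continuous_dist.continuousAt (dist_ne_zero.2 h)
  have hpath := (continuous_polyline hlam).continuousAt.comp
    (continuousAt_fst.prodMk (continuous_posLog.continuousAt.comp hratio))
  refine hpath.congr ?_
  filter_upwards [(isOpen_ne_fun continuous_fst continuous_snd).mem_nhds h] with p hp
  exact (diagonalExtension_of_ne lam a hp).symm

lemma continuousWithinAt_diagonalExtension_self (hlam : IsEquiconnecting lam) {w : ℕ → Z} {z : Z}
    (hw : Tendsto w atTop (𝓝 z)) :
    ContinuousWithinAt (fun p : (ℕ → Z) × (ℕ → Z) => diagonalExtension lam a p.1 p.2)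
      {p | dist p.1 w ≤ dist p.1 p.2} (w, w) := by
  by_cases hwa : w = fun _ => a
  · subst hwa
    have hzero : Continuous fun p : (ℕ → Z) × (ℕ → Z) => p.1 0 := by fun_prop
    exact hzero.continuousWithinAt.congr
      (fun p hp => diagonalExtension_of_dist_le hlam hp) (diagonalExtension_const_left hlam _)
  rw [← continuousWithinAt_sdiff_singleton, ContinuousWithinAt, diagonalExtension_self lam a hw]
  set l := 𝓝[{p : (ℕ → Z) × (ℕ → Z) | dist p.1 w ≤ dist p.1 p.2} \ {(w, w)}] (w, w)
  have hmem : ∀ᶠ p in l, dist p.1 w ≤ dist p.1 p.2 ∧ p.1 ≠ p.2 := by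
    filter_upwards [self_mem_nhdsWithin] with p ⟨hp, hpw⟩
    refine ⟨hp, fun heq => hpw ?_⟩
    have hpw' : p.1 = w := dist_le_zero.1 (hp.trans_eq (dist_eq_zero.2 heq))
    exact Prod.ext hpw' (heq.symm.trans hpw')
  have hfst : Tendsto Prod.fst l (𝓝 w) := continuousAt_fst.continuousWithinAt
  have he : Tendsto (fun p => dist p.1 fun _ => a) l (𝓝 (dist w fun _ => a)) :=
    hfst.dist tendsto_const_nhds
  have hpos : ∀ᶠ p in l, 0 < dist p.1 p.2 := hmem.mono fun p hp => dist_pos.2 hp.2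
  have hd : Tendsto (fun p : (ℕ → Z) × (ℕ → Z) => dist p.1 p.2) l (𝓝[>] 0) := by
    refine tendsto_nhdsWithin_iff.2 ⟨?_, hpos⟩
    rw [← dist_self w]
    exact (continuous_dist.continuousAt (x := (w, w))).continuousWithinAt
  have ht := tendsto_posLog_div_atTop (dist_pos.2 hwa) he hd
  refine (tendsto_polyline hlam ht hfst ?_ hw).congr' (hmem.mono fun p hp =>
    (diagonalExtension_of_ne lam a hp.2).symm)
  filter_upwards [hmem, eventually_lt_inv_two_pow_floor_posLog (dist_pos.2 hwa) he hd] with p hp hlt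
  exact hp.1.trans_lt hlt

lemma continuous_diagonalExtension_left (hlam : IsEquiconnecting lam) {u : ℕ → Z} {z : Z}
    (hu : Tendsto u atTop (𝓝 z)) : Continuous fun v => diagonalExtension lam a u v := by
  refine continuous_iff_continuousAt.2 fun v => ?_
  have hpair : ContinuousAt (fun v => (u, v)) v := (Continuous.prodMk_right u).continuousAt
  obtain rfl | h := eq_or_ne u v
  · exact (continuousWithinAt_diagonalExtension_self hlam hu).tendsto.comp
      (tendsto_nhdsWithin_iff.2 ⟨hpair, .of_forall fun _ => (dist_self u).trans_le dist_nonneg⟩)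
  · exact (continuousAt_diagonalExtension_of_ne hlam h).comp hpair

lemma continuous_diagonalExtension_right (hlam : IsEquiconnecting lam) {v : ℕ → Z} {z : Z}
    (hv : Tendsto v atTop (𝓝 z)) : Continuous fun u => diagonalExtension lam a u v := by
  refine continuous_iff_continuousAt.2 fun u => ?_
  have hpair : ContinuousAt (fun u => (u, v)) u := (Continuous.prodMk_left v).continuousAt
  obtain rfl | h := eq_or_ne u v
  · exact (continuousWithinAt_diagonalExtension_self hlam hv).tendsto.comp
      (tendsto_nhdsWithin_iff.2 ⟨hpair, .of_forall fun v => le_refl (dist v u)⟩)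
  · exact (continuousAt_diagonalExtension_of_ne hlam h).comp (f := fun u => (u, v)) hpair

end DiagonalExtension

theorem exists_separatelyContinuous_diagonal {X Z : Type*} [TopologicalSpace X]
    [TopologicalSpace Z] [TopologicalSpace.MetrizableSpace Z] {lam : Z → Z → unitInterval → Z}
    (hlam : IsEquiconnecting lam) {u : ℕ → X → Z} {g : X → Z} {a : Z}
    (hu : ∀ n, Continuous (u n)) (hg : ∀ x, Tendsto (fun n => u n x) atTop (𝓝 (g x)))
    (ha : ∀ x, u 0 x = a) :
    ∃ f : X → X → Z, (∀ x, Continuous (f x)) ∧ (∀ y, Continuous fun x => f x y) ∧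
      (∀ x, f x x = g x) ∧ ∀ x, (∀ n, u n x = a) → ∀ y, f x y = a ∧ f y x = a := by
  let : MetricSpace Z := TopologicalSpace.metrizableSpaceMetric Z
  let U (x : X) : ℕ → Z := fun n => u n x
  have hU : Continuous U := continuous_pi hu
  refine ⟨fun x y => diagonalExtension lam a (U x) (U y),
    fun x => (continuous_diagonalExtension_left hlam (hg x)).comp hU,
    fun y => (continuous_diagonalExtension_right hlam (hg y)).comp hU,
    fun x => diagonalExtension_self lam a (hg x), fun x hx y => ?_⟩
  have hUx : U x = fun _ => a := funext hx
  simp only [hUx]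
  exact ⟨diagonalExtension_const_left hlam _,
    (diagonalExtension_of_dist_le hlam le_rfl).trans (ha y)⟩

theorem stmt_14_general {X : Type*} [TopologicalSpace X] [ConnectedSpace X] {S : Type*}
    {Z : S → Type*} [∀ s, TopologicalSpace (Z s)] [∀ s, TopologicalSpace.MetrizableSpace (Z s)]
    {lam : ∀ s, Z s → Z s → unitInterval → Z s} (hlam : ∀ s, IsEquiconnecting (lam s)) :
    letI : TopologicalSpace (∀ s, Z s) := boxTopology
    ∀ g : X → ∀ s, Z s,
      (∃ h : ℕ → X → ∀ s, Z s, (∀ n, Continuous (h n)) ∧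
        ∀ x, Tendsto (fun n => h n x) atTop (𝓝 (g x))) →
      ∃ f : X → X → ∀ s, Z s,
        (∀ x, Continuous (f x)) ∧ (∀ y, Continuous fun x => f x y) ∧ ∀ x, f x x = g x := by
  let : TopologicalSpace (∀ s, Z s) := boxTopology
  rintro g ⟨h, hc, hg⟩
  obtain ⟨a, u, hu, hug, hu0, hfin⟩ := exists_approx_finite_support hc hg
  choose f hfl hfr hfdiag hfa using fun s =>
    exists_separatelyContinuous_diagonal (hlam s)
      (fun n => (continuous_apply_box s).comp (hu n))
      (fun x => ((continuous_apply_box s).tendsto _).comp (hug x)) (fun x => congrFun (hu0 x) s)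
  have hrest {x : X} {s : S} (hs : s ∉ {s | ∃ n, u n x s ≠ a s}) (y : X) :
      f s x y = a s ∧ f s y x = a s :=
    hfa s x (fun n => not_not.1 fun hne => hs ⟨n, hne⟩) y
  exact ⟨fun x y s => f s x y,
    fun x => continuous_box_of_finite (hfin x) (fun s => hfl s x) fun s hs y => (hrest hs y).1,
    fun y => continuous_box_of_finite (hfin y) (fun s => hfr s y) fun s hs x => (hrest hs x).2,
    fun x => funext fun s => hfdiag s x⟩

theorem stmt_14 {X : Type*} [TopologicalSpace X] [ParacompactSpace X]
    [ConnectedSpace X] {S : Type*} {Z : S → Type*} [∀ s, TopologicalSpace (Z s)]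
    [∀ s, TopologicalSpace.MetrizableSpace (Z s)]
    (lam : ∀ s, Z s → Z s → unitInterval → Z s)
    (hlamc : ∀ s, Continuous fun p : Z s × Z s × unitInterval => lam s p.1 p.2.1 p.2.2)
    (h0 : ∀ s (x y : Z s), lam s x y 0 = x)
    (h1 : ∀ s (x y : Z s), lam s x y 1 = y)
    (hd : ∀ s (x : Z s) (t : unitInterval), lam s x x t = x) :
    letI : TopologicalSpace (∀ s, Z s) := boxTopology
    ∀ g : X → ∀ s, Z s,
      (∃ h : ℕ → X → ∀ s, Z s, (∀ n, Continuous (h n)) ∧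
        ∀ x, Tendsto (fun n => h n x) atTop (nhds (g x))) →
      ∃ f : X → X → ∀ s, Z s,
        (∀ x, Continuous (f x)) ∧ (∀ y, Continuous fun x => f x y) ∧
        ∀ x, f x x = g x := by
  rintro g ⟨h, hc, hg⟩
  exact stmt_14_general (fun s => ⟨hlamc s, h0 s, h1 s, hd s⟩) g ⟨h, hc, hg⟩
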